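/- arXiv:1401.1444 — 2 statements merged into one kernel-verified Lean document; each statement's English description precedes it below -/
import Mathlib

section
/- For all positive integers r and s and every nonnegative integer n with 3-adic expansion n = n_0 + 3 n_1 + 3^2 n_2 + \cdots + 3^m n_m (0 \le n_i \le 2), one has, modulo 9: a_n(r,s) \equiv \prod_{i=0}^{m} a_{n_i}(r,s) + 3 \sum_{\nu=1}^{m} (\prod_{0 \le i \le m, i \ne \nu-1, \nu} a_{n_i}(r,s)) \cdot f(n_{\nu-1}, n_\nu; r, s), where f(x, y; r, s) = x(x+1) y ( s(y+1) + (-1)^s ( s(y-1) + r y ) ) + \chi(r=1)(x+2)(x+1) y + \chi(s=1)((-1)^r - 1)(x-1) x y^2, all computed in the integers. -/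
open Finset

/-- The generalised Apéry numbers `a_n(r,s) = ∑_{k=0}^n C(n,k)^r C(n+k,k)^s`. -/
def apery (r s n : ℕ) : ℕ :=
  ∑ k ∈ Finset.range (n + 1), n.choose k ^ r * (n + k).choose k ^ s

/-- `χ(P)`: the indicator of the statement `P`. -/
def chi (P : Prop) [Decidable P] : ℤ := if P then 1 else 0

/-- The correction term `f(x, y; r, s)` from Theorem 1. -/
def apf (r s : ℕ) (x y : ℤ) : ℤ :=
  x * (x + 1) * y * ((s : ℤ) * (y + 1) + (-1) ^ s * ((s : ℤ) * (y - 1) + (r : ℤ) * y))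
  + chi (r = 1) * (x + 2) * (x + 1) * y
  + chi (s = 1) * ((-1) ^ r - 1) * (x - 1) * x * y ^ 2

/-
Splitting the sum for `a_{3N+i}` by the residue of `k` modulo 3, each of its binomial
coefficients is `C(N, K)` or `C(N+K, K)` times a factor which modulo 9 is a constant plus 3
times a linear form in `N, K, 1`. Hence, with `t_N(K) = C(N,K)^r C(N+K,K)^s` and an explicit
`c_i`, `a_{3N+i} ≡ a_i a_N + 3 ∑ K, c_i(N, K) t_N(K)` modulo 9. The last sum is needed only
modulo 3, where Lucas' theorem reduces it to the last digit `j` of `N = 3N' + j`: it equals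
`f(i, j) a_{N'}`. Unrolling this two-digit recurrence gives the theorem, since `3 a_{N'}` is 3
times the product of the `a_{n_i}` over the digits of `N'`, again by Lucas.
-/

theorem sum_range_mul_eq_sum_sum {M : Type*} [AddCommMonoid M] (f : ℕ → M) (m n : ℕ) :
    ∑ k ∈ range (m * n), f k = ∑ a ∈ range n, ∑ b ∈ range m, f (m * a + b) := by
  induction n with
  | zero => simp
  | succ n ih => rw [mul_add_one, sum_range_add, ih, sum_range_succ]

theorem eq_prod_mul_add_sum_of_recurrence {R : Type*} [CommSemiring R] {x A e : ℕ → R} {m : ℕ}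
    (h : ∀ j < m, x j = A j * x (j + 1) + e j) :
    x 0 = (∏ i ∈ range m, A i) * x m + ∑ j ∈ range m, (∏ i ∈ range j, A i) * e j := by
  induction m with
  | zero => simp
  | succ m ih =>
    rw [ih fun j hj => h j (hj.trans m.lt_succ_self), h m m.lt_succ_self, prod_range_succ,
      sum_range_succ]
    ring

theorem prod_erase_erase_range {M : Type*} [CommMonoid M] (f : ℕ → M) {j n : ℕ} (h : j + 2 ≤ n) :
    ∏ i ∈ ((range n).erase j).erase (j + 1), f i
      = (∏ i ∈ range j, f i) * ∏ i ∈ Ico (j + 2) n, f i := by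
  rw [← prod_union (disjoint_left.2 fun i => by simp only [mem_range, mem_Ico]; omega)]
  refine prod_congr (Finset.ext fun i => ?_) fun _ _ => rfl
  simp only [mem_erase, mem_union, mem_range, mem_Ico]
  omega

theorem add_pow_of_sq_eq_zero {R : Type*} [CommRing R] {y : R} (hy : y ^ 2 = 0) (x : R) (n : ℕ) :
    (x + y) ^ n = x ^ n + n * x ^ (n - 1) * y := by
  have h := sq_dvd_add_pow_sub_sub y x n
  rw [hy, zero_dvd_iff] at h
  linear_combination h

section Recurrence

variable (R : Type*) [CommRing R] (n k : ℕ)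

theorem cast_choose_succ_mul :
    (n.choose (k + 1) : R) * (k + 1) = n.choose k * (n - k) := by
  rcases le_or_gt k n with h | h
  · have := congrArg (Nat.cast : ℕ → R) (Nat.choose_succ_right_eq n k)
    push_cast [h] at this
    exact this
  · simp [Nat.choose_eq_zero_of_lt h, Nat.choose_eq_zero_of_lt (h.trans k.lt_succ_self)]

theorem cast_succ_choose_mul :
    ((n + 1).choose k : R) * (n + 1 - k) = n.choose k * (n + 1) := by
  rcases le_or_gt k (n + 1) with h | h
  · have := congrArg (Nat.cast : ℕ → R) (Nat.choose_mul_succ_eq n k)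
    push_cast [h] at this
    exact this.symm
  · simp [Nat.choose_eq_zero_of_lt h, Nat.choose_eq_zero_of_lt (n.lt_succ_self.trans h)]

end Recurrence

section Prime

variable {p : ℕ} [Fact p.Prime]

theorem cast_choose_lucas (N K : ℕ) {i j : ℕ} (hi : i < p) (hj : j < p) :
    ((p * N + i).choose (p * K + j) : ZMod p) = i.choose j * N.choose K := by
  have hp : 0 < p := Fact.out (p := p.Prime).pos
  have h := (ZMod.natCast_eq_natCast_iff _ _ p).2
    (Choose.choose_modEq_choose_mod_mul_choose_div_nat (n := p * N + i) (k := p * K + j) (p := p))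
  rw [Nat.mul_add_mod, Nat.mul_add_mod, Nat.mod_eq_of_lt hi, Nat.mod_eq_of_lt hj,
    Nat.mul_add_div hp, Nat.mul_add_div hp, Nat.div_eq_of_lt hi, Nat.div_eq_of_lt hj] at h
  exact_mod_cast h

/- When adding the last digits `i + j` carries, both sides vanish. -/
theorem cast_choose_add_lucas (N K : ℕ) {i j : ℕ} (hi : i < p) (hj : j < p) :
    ((p * N + i + (p * K + j)).choose (p * K + j) : ZMod p)
      = (i + j).choose j * (N + K).choose K := by
  rcases lt_or_ge (i + j) p with h | h
  · rw [← cast_choose_lucas (N + K) K h hj, mul_add, add_add_add_comm]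
  · obtain ⟨l, hl⟩ := Nat.exists_eq_add_of_le h
    have hlj : l.choose j = 0 := Nat.choose_eq_zero_of_lt (by omega)
    have hleft := cast_choose_lucas (N + K + 1) K (i := l) (by omega) hj
    have hright := cast_choose_lucas 1 0 (i := l) (by omega) hj
    rw [hlj, Nat.cast_zero, zero_mul] at hleft hright
    rw [show p * N + i + (p * K + j) = p * (N + K + 1) + l by linear_combination hl, hleft,
      show i + j = p * 1 + l by linear_combination hl, show j = p * 0 + j by ring, hright, zero_mul]

theorem dvd_choose_mul_of_not_dvd (N : ℕ) {k : ℕ} (hk : ¬ p ∣ k) : p ∣ (p * N).choose k := by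
  have hp : 0 < p := Fact.out (p := p.Prime).pos
  have hmod : k % p ≠ 0 := fun h => hk (Nat.dvd_of_mod_eq_zero h)
  have h := cast_choose_lucas N (k / p) hp (k.mod_lt hp)
  rw [Nat.div_add_mod, Nat.choose_eq_zero_of_lt (Nat.pos_of_ne_zero hmod)] at h
  exact (ZMod.natCast_eq_zero_iff _ p).1 (by simpa using h)

/- Vandermonde with `p + p * N`: in every term other than the two extreme ones both binomial
coefficients are divisible by `p`. -/
theorem cast_choose_mul_mul_sq (N K : ℕ) :
    ((p * N).choose (p * K) : ZMod (p ^ 2)) = N.choose K := by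
  have hp : p.Prime := Fact.out
  induction N generalizing K with
  | zero => cases K <;> simp [Nat.choose_eq_zero_of_lt, hp.pos]
  | succ N ih =>
    cases K with
    | zero => simp
    | succ K =>
      have hmiddle : ∀ ij ∈ antidiagonal (p * (K + 1)),
          ij ≠ (0, p * (K + 1)) ∧ ij ≠ (p, p * K) →
            ((p.choose ij.1 * (p * N).choose ij.2 : ℕ) : ZMod (p ^ 2)) = 0 := by
        rintro ⟨a, b⟩ hab ⟨h0, h1⟩
        rw [HasAntidiagonal.mem_antidiagonal, mul_add_one] at hab
        simp only [ne_eq, Prod.mk.injEq, mul_add_one] at h0 h1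
        rcases lt_or_ge p a with ha | ha
        · simp [Nat.choose_eq_zero_of_lt ha]
        have hpa : ¬ p ∣ a := fun h =>
          have := Nat.le_of_dvd (by omega) h
          by omega
        have hpb : ¬ p ∣ b := fun h =>
          hpa ((Nat.dvd_add_iff_left h).2 (hab ▸ ⟨K + 1, (mul_add_one p K).symm⟩))
        rw [ZMod.natCast_eq_zero_iff, sq]
        exact mul_dvd_mul (hp.dvd_choose_self (by omega) (by omega))
          (dvd_choose_mul_of_not_dvd N hpb)
      rw [mul_add_one p N, add_comm, Nat.add_choose_eq, Nat.cast_sum,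
        sum_eq_add (0, p * (K + 1)) (p, p * K) (by simp [hp.ne_zero.symm]) hmiddle
          (by simp) (by simp [mul_add_one, add_comm])]
      simp [ih, Nat.choose_succ_succ', add_comm]

end Prime

section ModNine

theorem add_three_mul_pow (a x : ZMod 9) (n : ℕ) :
    (a + 3 * x) ^ n = a ^ n + 3 * (n * a ^ (n - 1) * x) := by
  have hsq : (3 * x) ^ 2 = 0 := by ring_nf; reduce_mod_char
  rw [add_pow_of_sq_eq_zero hsq]
  ring

theorem one_add_three_mul_pow (x : ZMod 9) (n : ℕ) : (1 + 3 * x) ^ n = 1 + 3 * (n * x) := by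
  simp [add_three_mul_pow]

theorem two_add_three_mul_pow (x : ZMod 9) (n : ℕ) :
    (2 + 3 * x) ^ n = 2 ^ n - 3 * ((-1) ^ n * (n * x)) := by
  have htwo : (2 : ZMod 9) = -1 + 3 * 1 := by decide
  have hpow : (n : ZMod 9) * (-1) ^ (n - 1) = -(n * (-1) ^ n) := by
    cases n <;> simp [pow_succ]
  rw [htwo, add_assoc, ← mul_add, add_three_mul_pow, add_three_mul_pow]
  linear_combination 3 * x * hpow

theorem three_mul_pow (x : ZMod 9) {n : ℕ} (hn : n ≠ 0) :
    (3 * x) ^ n = 3 * (chi (n = 1) * x) := by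
  have hpow : (n : ZMod 9) * 0 ^ (n - 1) = chi (n = 1) := by
    rcases n with _ | _ | n <;> simp [chi] at hn ⊢
  rw [← zero_add (3 * x), add_three_mul_pow, zero_pow hn, hpow, zero_add]

variable (N K : ℕ)

theorem choose_three_mul_three_mul : ((3 * N).choose (3 * K) : ZMod 9) = N.choose K :=
  cast_choose_mul_mul_sq (p := 3) N K

theorem choose_three_mul_three_mul_add_one :
    ((3 * N).choose (3 * K + 1) : ZMod 9) = 3 * (N - K) * N.choose K := by
  have h := cast_choose_succ_mul (ZMod 9) (3 * N) (3 * K)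
  rw [choose_three_mul_three_mul] at h
  push_cast at h
  linear_combination (norm := (ring_nf; reduce_mod_char)) (1 - 3 * K) * h

theorem choose_three_mul_three_mul_add_two :
    ((3 * N).choose (3 * K + 2) : ZMod 9) = 3 * (N - K) * N.choose K := by
  have h := cast_choose_succ_mul (ZMod 9) (3 * N) (3 * K + 1)
  rw [choose_three_mul_three_mul_add_one] at h
  push_cast at h
  linear_combination (norm := (ring_nf; reduce_mod_char)) (5 + 6 * K) * h

theorem choose_three_mul_add_one_three_mul :
    ((3 * N + 1).choose (3 * K) : ZMod 9) = (1 + 3 * K) * N.choose K := by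
  have h := cast_succ_choose_mul (ZMod 9) (3 * N) (3 * K)
  rw [choose_three_mul_three_mul] at h
  push_cast at h
  linear_combination (norm := (ring_nf; reduce_mod_char)) (1 - 3 * (N - K)) * h

theorem choose_three_mul_add_one_three_mul_add_one :
    ((3 * N + 1).choose (3 * K + 1) : ZMod 9) = (1 + 3 * (N - K)) * N.choose K := by
  rw [Nat.choose_succ_succ', Nat.cast_add, choose_three_mul_three_mul,
    choose_three_mul_three_mul_add_one]
  ring

theorem choose_three_mul_add_one_three_mul_add_two :
    ((3 * N + 1).choose (3 * K + 2) : ZMod 9) = 3 * (2 * (N - K)) * N.choose K := by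
  rw [Nat.choose_succ_succ', Nat.cast_add, choose_three_mul_three_mul_add_one,
    choose_three_mul_three_mul_add_two]
  ring

theorem choose_three_mul_add_two_three_mul :
    ((3 * N + 2).choose (3 * K) : ZMod 9) = N.choose K := by
  have h := cast_succ_choose_mul (ZMod 9) (3 * N + 1) (3 * K)
  rw [choose_three_mul_add_one_three_mul] at h
  push_cast at h
  linear_combination (norm := (ring_nf; reduce_mod_char)) (5 + 6 * (N - K)) * h

theorem choose_three_mul_add_two_three_mul_add_one :
    ((3 * N + 2).choose (3 * K + 1) : ZMod 9) = (2 + 3 * N) * N.choose K := by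
  rw [Nat.choose_succ_succ', Nat.cast_add, choose_three_mul_add_one_three_mul,
    choose_three_mul_add_one_three_mul_add_one]
  ring

theorem choose_three_mul_add_two_three_mul_add_two :
    ((3 * N + 2).choose (3 * K + 2) : ZMod 9) = N.choose K := by
  rw [Nat.choose_succ_succ', Nat.cast_add, choose_three_mul_add_one_three_mul_add_one,
    choose_three_mul_add_one_three_mul_add_two]
  ring_nf
  reduce_mod_char

theorem choose_three_mul_add_add_one_three_mul_add_one :
    ((3 * (N + K + 1)).choose (3 * K + 1) : ZMod 9)
      = 3 * (N + K + 1) * (N + K).choose K := by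
  have h := cast_succ_choose_mul (ZMod 9) (N + K) K
  rw [choose_three_mul_three_mul_add_one]
  push_cast at h ⊢
  linear_combination 3 * h

theorem choose_three_mul_add_add_one_three_mul_add_two :
    ((3 * (N + K + 1)).choose (3 * K + 2) : ZMod 9)
      = 3 * (N + K + 1) * (N + K).choose K := by
  rw [choose_three_mul_three_mul_add_two, ← choose_three_mul_three_mul_add_one,
    choose_three_mul_add_add_one_three_mul_add_one]

theorem choose_three_mul_add_add_one_add_one_three_mul_add_two :
    ((3 * (N + K + 1) + 1).choose (3 * K + 2) : ZMod 9)
      = 3 * (2 * (N + K + 1)) * (N + K).choose K := by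
  rw [Nat.choose_succ_succ', Nat.cast_add, choose_three_mul_add_add_one_three_mul_add_one,
    choose_three_mul_add_add_one_three_mul_add_two]
  ring

end ModNine

/-- The summand `t_n(k) = C(n,k)^r C(n+k,k)^s` of the generalised Apéry number `a_n(r,s)`. -/
def aperyTerm (r s n k : ℕ) : ℕ := n.choose k ^ r * (n + k).choose k ^ s

theorem apery_eq_sum_aperyTerm (r s n : ℕ) :
    apery r s n = ∑ k ∈ range (n + 1), aperyTerm r s n k := rfl

theorem apery_zero (r s : ℕ) : apery r s 0 = 1 := by simp [apery]

theorem aperyTerm_eq_zero_of_lt {r n k : ℕ} (hr : r ≠ 0) (s : ℕ) (h : n < k) :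
    aperyTerm r s n k = 0 := by
  simp [aperyTerm, Nat.choose_eq_zero_of_lt h, hr]

theorem sum_mul_aperyTerm_eq_sum_blocks {R : Type*} [CommSemiring R] {r p i : ℕ} (hr : r ≠ 0)
    (s N : ℕ) (hi : i < p) (w : ℕ → R) :
    ∑ k ∈ range (p * N + i + 1), w k * aperyTerm r s (p * N + i) k
      = ∑ K ∈ range (N + 1), ∑ j ∈ range p,
          w (p * K + j) * aperyTerm r s (p * N + i) (p * K + j) := by
  rw [← sum_range_mul_eq_sum_sum (fun k => w k * (aperyTerm r s (p * N + i) k : R))]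
  refine sum_subset (range_mono (by rw [mul_add_one]; omega)) fun k _ hk => ?_
  rw [aperyTerm_eq_zero_of_lt hr s (by simp only [mem_range] at hk; omega), Nat.cast_zero, mul_zero]

section Lucas

variable {p : ℕ} [Fact p.Prime]

theorem aperyTerm_lucas (r s N K : ℕ) {i j : ℕ} (hi : i < p) (hj : j < p) :
    (aperyTerm r s (p * N + i) (p * K + j) : ZMod p) = aperyTerm r s i j * aperyTerm r s N K := by
  simp only [aperyTerm, Nat.cast_mul, Nat.cast_pow, cast_choose_lucas N K hi hj,
    cast_choose_add_lucas N K hi hj]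
  ring

theorem sum_mul_aperyTerm_lucas {r i : ℕ} (hr : r ≠ 0) (s N : ℕ) (hi : i < p)
    (w : ZMod p → ZMod p) :
    ∑ k ∈ range (p * N + i + 1), w k * aperyTerm r s (p * N + i) k
      = (∑ j ∈ range (i + 1), w j * aperyTerm r s i j) * apery r s N := by
  have hdigit : ∑ j ∈ range (i + 1), w j * aperyTerm r s i j
      = ∑ j ∈ range p, w j * aperyTerm r s i j :=
    sum_subset (range_mono hi) fun j _ hj => by
      rw [aperyTerm_eq_zero_of_lt hr s (by simp only [mem_range] at hj; omega), Nat.cast_zero,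
        mul_zero]
  rw [sum_mul_aperyTerm_eq_sum_blocks hr s N hi (fun k => w k), hdigit, apery_eq_sum_aperyTerm,
    Nat.cast_sum, sum_mul_sum, sum_comm]
  refine sum_congr rfl fun j hj => sum_congr rfl fun K _ => ?_
  rw [aperyTerm_lucas r s N K hi (mem_range.1 hj), Nat.cast_add, Nat.cast_mul, CharP.cast_eq_zero,
    zero_mul, zero_add, mul_assoc]

theorem apery_lucas {r i : ℕ} (hr : r ≠ 0) (s N : ℕ) (hi : i < p) :
    (apery r s (p * N + i) : ZMod p) = apery r s i * apery r s N := by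
  simpa [apery_eq_sum_aperyTerm] using sum_mul_aperyTerm_lucas hr s N hi fun _ => 1

end Lucas

/-- The number with base-`p` digits `d j, d (j + 1), …, d (m - 1)`, least significant first: what
is left of `∑ i < m, d i * p ^ i` once its `j` lowest digits are removed. -/
def digitTail (p : ℕ) (d : ℕ → ℕ) (m j : ℕ) : ℕ := ∑ i ∈ Ico j m, d i * p ^ (i - j)

theorem digitTail_zero (p : ℕ) (d : ℕ → ℕ) (m : ℕ) :
    digitTail p d m 0 = ∑ i ∈ range m, d i * p ^ i := by
  simp [digitTail]

theorem digitTail_self (p : ℕ) (d : ℕ → ℕ) (m : ℕ) : digitTail p d m m = 0 := by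
  simp [digitTail]

theorem digitTail_eq_mul_add (p : ℕ) (d : ℕ → ℕ) {m j : ℕ} (h : j < m) :
    digitTail p d m j = p * digitTail p d m (j + 1) + d j := by
  rw [digitTail, sum_eq_sum_Ico_succ_bot h, digitTail, mul_sum, add_comm, Nat.sub_self, pow_zero,
    mul_one]
  congr 1
  refine sum_congr rfl fun i hi => ?_
  rw [show i - j = i - (j + 1) + 1 by have := (mem_Ico.1 hi).1; omega, pow_succ]
  ring

theorem apery_digitTail_lucas {p : ℕ} [Fact p.Prime] {r m : ℕ} (hr : r ≠ 0) (s : ℕ) {d : ℕ → ℕ}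
    (hd : ∀ i < m, d i < p) {j : ℕ} (hj : j ≤ m) :
    (apery r s (digitTail p d m j) : ZMod p) = ∏ i ∈ Ico j m, (apery r s (d i) : ZMod p) := by
  induction hj using Nat.decreasingInduction with
  | self => simp [digitTail_self, apery_zero]
  | of_succ j hj ih =>
    rw [digitTail_eq_mul_add p d hj, apery_lucas hr s _ (hd j hj), ih, prod_eq_prod_Ico_succ_bot hj]

/-- The coefficient `c_i(N, k)` of the first-order expansion
`a_{3N+i} ≡ a_i a_N + 3 ∑ k, c_i(N, k) t_N(k)` modulo 9, for a digit `i`; every `i ≥ 2` is treated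
as the digit 2. -/
def aperyCorrection {R : Type*} [CommRing R] (r s i : ℕ) (N k : R) : R :=
  match i with
  | 0 => chi (r = 1) * (k - N)
  | 1 => (r + s) * k + (-1) ^ s * (r * (N - k) - s * (N + k))
  | _ => chi (s = 1) * ((-1) ^ r - 1) * (N + k)

theorem map_aperyCorrection {R S : Type*} [CommRing R] [CommRing S] (φ : R →+* S) (r s i : ℕ)
    (N k : R) : φ (aperyCorrection r s i N k) = aperyCorrection r s i (φ N) (φ k) := by
  rcases i with _ | _ | i <;> simp [aperyCorrection]

section ModNine

theorem three_mul_eq_three_mul_of_castHom_eq {x y : ZMod 9}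
    (h : ZMod.castHom (by norm_num : 3 ∣ 9) (ZMod 3) x
      = ZMod.castHom (by norm_num : 3 ∣ 9) (ZMod 3) y) : 3 * x = 3 * y := by
  decide +revert

theorem two_pow_zmod_three (n : ℕ) : (2 : ZMod 3) ^ n = (-1) ^ n := rfl

theorem three_mul_two_pow (n : ℕ) : (3 : ZMod 9) * 2 ^ n = 3 * (-1) ^ n :=
  three_mul_eq_three_mul_of_castHom_eq <| by
    simp only [map_pow, map_neg, map_one, map_ofNat, two_pow_zmod_three]

theorem aperyTerm_eq_of_choose_eq {R : Type*} [CommSemiring R] (r s : ℕ) {n k N K : ℕ} {a b : R}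
    (ha : (n.choose k : R) = a * N.choose K)
    (hb : ((n + k).choose k : R) = b * (N + K).choose K) :
    (aperyTerm r s n k : R) = a ^ r * b ^ s * aperyTerm r s N K := by
  simp only [aperyTerm, Nat.cast_mul, Nat.cast_pow, ha, hb, mul_pow]
  ring

variable {r s : ℕ} (N K : ℕ)

theorem sum_aperyTerm_three_mul (hr : r ≠ 0) :
    ∑ j ∈ range 3, (aperyTerm r s (3 * N) (3 * K + j) : ZMod 9)
      = (1 + 3 * aperyCorrection r s 0 (N : ZMod 9) K) * aperyTerm r s N K := by
  have h0 : (aperyTerm r s (3 * N) (3 * K) : ZMod 9) = 1 ^ r * 1 ^ s * aperyTerm r s N K :=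
    aperyTerm_eq_of_choose_eq r s
      (by rw [choose_three_mul_three_mul, one_mul])
      (by rw [← mul_add, choose_three_mul_three_mul, one_mul])
  have h1 : (aperyTerm r s (3 * N) (3 * K + 1) : ZMod 9)
      = (3 * (N - K)) ^ r * (1 + 3 * N) ^ s * aperyTerm r s N K :=
    aperyTerm_eq_of_choose_eq r s (choose_three_mul_three_mul_add_one N K) <| by
      rw [← add_assoc, ← mul_add, choose_three_mul_add_one_three_mul_add_one, Nat.cast_add,
        add_sub_cancel_right]
  have h2 : (aperyTerm r s (3 * N) (3 * K + 2) : ZMod 9)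
      = (3 * (N - K)) ^ r * 1 ^ s * aperyTerm r s N K :=
    aperyTerm_eq_of_choose_eq r s (choose_three_mul_three_mul_add_two N K) <| by
      rw [← add_assoc, ← mul_add, choose_three_mul_add_two_three_mul_add_two, one_mul]
  simp only [sum_range_succ, range_zero, sum_empty, zero_add, add_zero, h0, h1, h2,
    three_mul_pow _ hr, one_add_three_mul_pow, one_pow, aperyCorrection]
  linear_combination (norm := (ring_nf; reduce_mod_char))

theorem sum_aperyTerm_three_mul_add_one (hr : r ≠ 0) (hs : s ≠ 0) :
    ∑ j ∈ range 3, (aperyTerm r s (3 * N + 1) (3 * K + j) : ZMod 9)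
      = (1 + 2 ^ s + 3 * aperyCorrection r s 1 (N : ZMod 9) K) * aperyTerm r s N K := by
  have h0 : (aperyTerm r s (3 * N + 1) (3 * K) : ZMod 9)
      = (1 + 3 * K) ^ r * (1 + 3 * K) ^ s * aperyTerm r s N K :=
    aperyTerm_eq_of_choose_eq r s (choose_three_mul_add_one_three_mul N K) <| by
      rw [add_right_comm, ← mul_add, choose_three_mul_add_one_three_mul]
  have h1 : (aperyTerm r s (3 * N + 1) (3 * K + 1) : ZMod 9)
      = (1 + 3 * (N - K)) ^ r * (2 + 3 * (N + K)) ^ s * aperyTerm r s N K :=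
    aperyTerm_eq_of_choose_eq r s (choose_three_mul_add_one_three_mul_add_one N K) <| by
      rw [add_add_add_comm, ← mul_add, choose_three_mul_add_two_three_mul_add_one, Nat.cast_add]
  have h2 : (aperyTerm r s (3 * N + 1) (3 * K + 2) : ZMod 9)
      = (3 * (2 * (N - K))) ^ r * (3 * (N + K + 1)) ^ s * aperyTerm r s N K :=
    aperyTerm_eq_of_choose_eq r s (choose_three_mul_add_one_three_mul_add_two N K) <| by
      rw [show 3 * N + 1 + (3 * K + 2) = 3 * (N + K + 1) by ring,
        choose_three_mul_add_add_one_three_mul_add_two]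
  simp only [sum_range_succ, range_zero, sum_empty, zero_add, add_zero, h0, h1, h2,
    three_mul_pow _ hr, three_mul_pow _ hs, one_add_three_mul_pow, two_add_three_mul_pow,
    aperyCorrection]
  linear_combination (norm := (ring_nf; reduce_mod_char))
    r * (N - K) * aperyTerm r s N K * three_mul_two_pow s

theorem sum_aperyTerm_three_mul_add_two (hs : s ≠ 0) :
    ∑ j ∈ range 3, (aperyTerm r s (3 * N + 2) (3 * K + j) : ZMod 9)
      = (1 + 3 * (chi (s = 1) * ((-1) ^ r - 1)) + 3 * aperyCorrection r s 2 (N : ZMod 9) K)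
        * aperyTerm r s N K := by
  have h0 : (aperyTerm r s (3 * N + 2) (3 * K) : ZMod 9) = 1 ^ r * 1 ^ s * aperyTerm r s N K :=
    aperyTerm_eq_of_choose_eq r s
      (by rw [choose_three_mul_add_two_three_mul, one_mul])
      (by rw [add_right_comm, ← mul_add, choose_three_mul_add_two_three_mul, one_mul])
  have h1 : (aperyTerm r s (3 * N + 2) (3 * K + 1) : ZMod 9)
      = (2 + 3 * N) ^ r * (3 * (N + K + 1)) ^ s * aperyTerm r s N K :=
    aperyTerm_eq_of_choose_eq r s (choose_three_mul_add_two_three_mul_add_one N K) <| by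
      rw [show 3 * N + 2 + (3 * K + 1) = 3 * (N + K + 1) by ring,
        choose_three_mul_add_add_one_three_mul_add_one]
  have h2 : (aperyTerm r s (3 * N + 2) (3 * K + 2) : ZMod 9)
      = 1 ^ r * (3 * (2 * (N + K + 1))) ^ s * aperyTerm r s N K :=
    aperyTerm_eq_of_choose_eq r s
      (by rw [choose_three_mul_add_two_three_mul_add_two, one_mul])
      (by rw [show 3 * N + 2 + (3 * K + 2) = 3 * (N + K + 1) + 1 by ring,
        choose_three_mul_add_add_one_add_one_three_mul_add_two])
  simp only [sum_range_succ, range_zero, sum_empty, zero_add, add_zero, h0, h1, h2,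
    three_mul_pow _ hs, two_add_three_mul_pow, one_pow, aperyCorrection]
  linear_combination (norm := (ring_nf; reduce_mod_char))
    chi (s = 1) * (N + K + 1) * aperyTerm r s N K * three_mul_two_pow r

theorem apery_one (r s : ℕ) : apery r s 1 = 1 + 2 ^ s := by simp [apery, sum_range_succ]

theorem apery_two_zmod_nine (hs : s ≠ 0) :
    (apery r s 2 : ZMod 9) = 1 + 3 * (chi (s = 1) * ((-1) ^ r - 1)) := by
  simpa [apery_eq_sum_aperyTerm, aperyCorrection, aperyTerm] using
    sum_aperyTerm_three_mul_add_two (r := r) 0 0 hs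

theorem sum_aperyTerm_three_mul_add (hr : r ≠ 0) (hs : s ≠ 0) {i : ℕ} (hi : i < 3) :
    ∑ j ∈ range 3, (aperyTerm r s (3 * N + i) (3 * K + j) : ZMod 9)
      = (apery r s i + 3 * aperyCorrection r s i (N : ZMod 9) K) * aperyTerm r s N K := by
  interval_cases i
  · simpa [apery_zero] using sum_aperyTerm_three_mul N K hr
  · simpa [apery_one] using sum_aperyTerm_three_mul_add_one N K hr hs
  · simpa [apery_two_zmod_nine hs] using sum_aperyTerm_three_mul_add_two N K hs

theorem apery_three_mul_add (hr : r ≠ 0) (hs : s ≠ 0) {i : ℕ} (hi : i < 3) :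
    (apery r s (3 * N + i) : ZMod 9) = apery r s i * apery r s N
      + 3 * ∑ k ∈ range (N + 1), aperyCorrection r s i (N : ZMod 9) k * aperyTerm r s N k := by
  have hblocks : (apery r s (3 * N + i) : ZMod 9)
      = ∑ K ∈ range (N + 1), ∑ j ∈ range 3, (aperyTerm r s (3 * N + i) (3 * K + j) : ZMod 9) := by
    simpa [apery_eq_sum_aperyTerm] using
      sum_mul_aperyTerm_eq_sum_blocks hr s N hi fun _ => (1 : ZMod 9)
  rw [hblocks, apery_eq_sum_aperyTerm r s N, Nat.cast_sum, mul_sum, mul_sum, ← sum_add_distrib]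
  refine sum_congr rfl fun K _ => ?_
  rw [sum_aperyTerm_three_mul_add N K hr hs hi]
  ring

theorem sum_mul_aperyTerm_one (w : ZMod 3 → ZMod 3) :
    ∑ k ∈ range (1 + 1), w k * aperyTerm r s 1 k = w 0 + (-1) ^ s * w 1 := by
  simp [sum_range_succ, aperyTerm, two_pow_zmod_three, mul_comm]

theorem sum_mul_aperyTerm_two (hs : s ≠ 0) (w : ZMod 3 → ZMod 3) :
    ∑ k ∈ range (2 + 1), w k * aperyTerm r s 2 k = w 0 := by
  have h3 : (3 : ZMod 3) ^ s = 0 := zero_pow hs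
  have h6 : (6 : ZMod 3) ^ s = 0 := zero_pow hs
  simp [sum_range_succ, aperyTerm, Nat.choose, h3, h6]

/- Modulo 3, each of the polynomials `x (x + 1)`, `(x + 2) (x + 1)` and `(x - 1) x` in `f` vanishes
at all but one digit, so `f` interpolates the three cases of `aperyCorrection`. -/
theorem apf_eq_sum_aperyCorrection (hs : s ≠ 0) {i j : ℕ} (hi : i < 3) (hj : j < 3) :
    (apf r s i j : ZMod 3)
      = ∑ k ∈ range (j + 1), aperyCorrection r s i (j : ZMod 3) k * aperyTerm r s j k := by
  have hsq : (-1 : ZMod 3) ^ s * (-1) ^ s = 1 := by rw [← mul_pow]; simp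
  have hchi : (chi (s = 1) : ZMod 3) * (-1) ^ s = -chi (s = 1) := by
    by_cases h : s = 1 <;> simp [chi, h]
  interval_cases j
  · interval_cases i <;> simp [apf, aperyCorrection, aperyTerm]
  · rw [sum_mul_aperyTerm_one (aperyCorrection r s i _)]
    interval_cases i <;> simp only [apf, aperyCorrection] <;> push_cast
    · linear_combination (norm := (ring_nf; reduce_mod_char))
    · linear_combination (norm := (ring_nf; reduce_mod_char)) 2 * s * hsq
    · linear_combination (norm := (ring_nf; reduce_mod_char)) -2 * ((-1) ^ r - 1) * hchi
  · rw [sum_mul_aperyTerm_two hs (aperyCorrection r s i _)]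
    interval_cases i <;> simp only [apf, aperyCorrection] <;> push_cast <;>
      linear_combination (norm := (ring_nf; reduce_mod_char))

theorem apery_three_mul_three_mul_add_add (hr : r ≠ 0) (hs : s ≠ 0) {i j : ℕ} (hi : i < 3)
    (hj : j < 3) :
    (apery r s (3 * (3 * N + j) + i) : ZMod 9)
      = apery r s i * apery r s (3 * N + j) + 3 * (apf r s i j * apery r s N) := by
  rw [apery_three_mul_add _ hr hs hi]
  congr 1
  apply three_mul_eq_three_mul_of_castHom_eq
  have hdigit : ((3 * N + j : ℕ) : ZMod 3) = j := by
    rw [Nat.cast_add, Nat.cast_mul, CharP.cast_eq_zero, zero_mul, zero_add]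
  simp only [map_sum, map_mul, map_aperyCorrection, map_natCast, map_intCast, hdigit]
  rw [sum_mul_aperyTerm_lucas hr s N hj (aperyCorrection r s i (j : ZMod 3)),
    apf_eq_sum_aperyCorrection hs hi hj]

theorem three_mul_apery_digitTail (hr : r ≠ 0) {d : ℕ → ℕ} {m : ℕ} (hd : ∀ i < m, d i < 3) {j : ℕ}
    (hj : j ≤ m) :
    3 * (apery r s (digitTail 3 d m j) : ZMod 9)
      = 3 * ∏ i ∈ Ico j m, (apery r s (d i) : ZMod 9) :=
  three_mul_eq_three_mul_of_castHom_eq <| by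
    simpa using apery_digitTail_lucas hr s hd hj

theorem apery_digitTail_recurrence (hr : r ≠ 0) (hs : s ≠ 0) {d : ℕ → ℕ} {m : ℕ}
    (hd : ∀ i < m, d i < 3) {j : ℕ} (hj : j + 2 ≤ m) :
    (apery r s (digitTail 3 d m j) : ZMod 9)
      = apery r s (d j) * apery r s (digitTail 3 d m (j + 1))
        + 3 * (apf r s (d j) (d (j + 1)) * ∏ i ∈ Ico (j + 2) m, (apery r s (d i) : ZMod 9)) := by
  rw [digitTail_eq_mul_add 3 d (by omega : j < m), digitTail_eq_mul_add 3 d (by omega : j + 1 < m),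
    apery_three_mul_three_mul_add_add _ hr hs (hd j (by omega)) (hd (j + 1) (by omega))]
  linear_combination (apf r s (d j) (d (j + 1)) : ZMod 9) * three_mul_apery_digitTail hr hd hj

end ModNine

/-- The mod-9 factorisation theorem for the generalised Apéry numbers, `s ≥ 1`. -/
theorem apery_mod_nine (r s : ℕ) (hr : 0 < r) (hs : 0 < s)
    (n m : ℕ) (d : ℕ → ℕ) (hd2 : ∀ i, d i ≤ 2)
    (hn : n = ∑ i ∈ Finset.range (m + 1), d i * 3 ^ i) :
    (apery r s n : ℤ) ≡
      (∏ i ∈ Finset.range (m + 1), (apery r s (d i) : ℤ))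
      + 3 * ∑ ν ∈ Finset.Icc 1 m,
          (∏ i ∈ ((Finset.range (m + 1)).erase (ν - 1)).erase ν,
            (apery r s (d i) : ℤ)) * apf r s (d (ν - 1)) (d ν)
      [ZMOD 9] := by
  have hd : ∀ i < m + 1, d i < 3 := fun i _ => Nat.lt_succ_of_le (hd2 i)
  have hunroll := eq_prod_mul_add_sum_of_recurrence
    (x := fun j => (apery r s (digitTail 3 d (m + 1) j) : ZMod 9)) fun j (hj : j < m) =>
      apery_digitTail_recurrence hr.ne' hs.ne' hd (by omega : j + 2 ≤ m + 1)
  have hlast : digitTail 3 d (m + 1) m = d m := by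
    rw [digitTail_eq_mul_add 3 d m.lt_succ_self, digitTail_self, mul_zero, zero_add]
  refine (ZMod.intCast_eq_intCast_iff _ _ 9).1 ?_
  push_cast
  rw [hn, ← digitTail_zero, hunroll, hlast, prod_range_succ, mul_sum, ← Ico_add_one_right_eq_Icc,
    sum_Ico_eq_sum_range]
  congr 1
  refine sum_congr (by simp) fun j hj => ?_
  have hj : j + 2 ≤ m + 1 := by simpa using hj
  rw [add_comm 1, Nat.add_sub_cancel, prod_erase_erase_range _ hj]
  ring
end

section
/- Let r and s be positive integers with r \equiv 1 (mod 3), r \ge 4, and s \equiv 5 (mod 6). Then for every nonnegative integer n: (i) a_n(r,s) \equiv 1 (mod 9) iff every digit of n is 0 or 2; (ii) a_n(r,s) \equiv 3 (mod 9) iff the 3-adic expansion of n has exactly one occurrence of the string 21 and all digits of n not belonging to this occurrence are 0 or 2; (iii) a_n(r,s) \equiv 6 (mod 9) iff the 3-adic expansion of n has exactly one occurrence of the string 01 (including the case of a leading digit 1) and all digits of n not belonging to this occurrence are 0 or 2; (iv) in all other cases 9 divides a_n(r,s); in particular a_n(r,s) is never \equiv 2, 4, 5, 7, or 8 (mod 9).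 -/
open Finset

/-- The number of digits among `d 0, …, d m` equal to `v`. -/
def digitCount (d : ℕ → ℕ) (m v : ℕ) : ℕ :=
  ((Finset.range (m + 1)).filter fun i => d i = v).card

/-- The number of occurrences of the string `ab` in the 3-adic expansion with digits
`d 0, …, d m` (using the convention that digits above position `m` are zero): indices `ν`
with `1 ≤ ν ≤ m + 1`, `d ν = a` and `d (ν - 1) = b`. -/
def occ (d : ℕ → ℕ) (m a b : ℕ) : ℕ :=
  ((Finset.Icc 1 (m + 1)).filter fun ν => d ν = a ∧ d (ν - 1) = b).card

/-- The 3-adic expansion of `n` (digits `d 0, …, d m`) has exactly one occurrence of the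
string `ab`, and all digits not belonging to this occurrence are `0` or `2`. -/
def uniqueOcc (d : ℕ → ℕ) (m a b : ℕ) : Prop :=
  occ d m a b = 1 ∧
  ∀ ν ∈ Finset.Icc 1 (m + 1), (d ν = a ∧ d (ν - 1) = b) →
    ∀ i ≤ m, i ≠ ν → i ≠ ν - 1 → (d i = 0 ∨ d i = 2)

/-!
Modulo `p²`, `(1 + X) ^ (p * N) = (1 + X ^ p) ^ N + N * g * (1 + X ^ p) ^ (N - 1)`, where
`g = (1 + X) ^ p - (1 + X ^ p)` is divisible by `p`. Comparing coefficients refines Lucas'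
congruence to `p²` and, for `p = 3`, evaluates the Apéry sum of `3 * N + b`: modulo `9` it is the
Apéry number of `N` if `b` is `0` or `2`, and `3 * (N + 2)` times it if `b = 1`. Hence the Apéry
number of `n` is a product of factors `3 * (b + 2)`, one for each digit `1` of `n`, with `b` the
digit to its left. Two such factors vanish modulo `9`, and a single one is `6` or `3` according as
`b` is `0` or `2`.

Congruences modulo `p²` are stated as equalities in a commutative ring in which `p ^ 2 = 0`.
-/

section Binomials

variable {p : ℕ} {R : Type*} [CommRing R]

theorem sum_range_mul {M : Type*} [AddCommMonoid M] (f : ℕ → M) (q L : ℕ) :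
    ∑ k ∈ range (q * L), f k = ∑ K ∈ range L, ∑ c ∈ range q, f (q * K + c) := by
  induction L with
  | zero => simp
  | succ L ih => rw [Nat.mul_succ, sum_range_add, ih, sum_range_succ _ L]

theorem cast_pow_eq_zero (hR : (p : R) ^ 2 = 0) {a t : ℕ} (ha : p ∣ a) (ht : 2 ≤ t) :
    (a : R) ^ t = 0 := by
  obtain ⟨b, rfl⟩ := ha
  rw [Nat.cast_mul, mul_pow, pow_eq_zero_of_le ht hR, zero_mul]

theorem prod_mul_eq_zero_of_nontrivial {ι : Type*} {a : R} (ha : a ^ 2 = 0)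
    {S : Finset ι} (hS : S.Nontrivial) (f : ι → R) : ∏ i ∈ S, a * f i = 0 := by
  rw [prod_mul_distrib, prod_const, pow_eq_zero_of_le (one_lt_card_iff_nontrivial.mpr hS) ha,
    zero_mul]

theorem cast_mul_choose_pred (N K : ℕ) :
    (N : R) * (N - 1).choose K = (N - K) * N.choose K := by
  rcases N with _ | N
  · rcases K with _ | K <;> simp
  rcases le_or_gt K (N + 1) with h | h
  · have := congrArg (Nat.cast (R := R)) (Nat.choose_mul_succ_eq N K)
    push_cast [Nat.cast_sub h] at this
    simpa [mul_comm] using this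
  · simp [Nat.choose_eq_zero_of_lt h, Nat.choose_eq_zero_of_lt ((Nat.lt_succ_self N).trans h)]

theorem cast_succ_mul_choose_succ (N K : ℕ) :
    ((K : R) + 1) * N.choose (K + 1) = (N - K) * N.choose K := by
  rcases le_or_gt K N with h | h
  · simpa [Nat.cast_sub h, mul_comm] using
      congrArg (Nat.cast (R := R)) (Nat.choose_succ_right_eq N K)
  · simp [Nat.choose_eq_zero_of_lt h, Nat.choose_eq_zero_of_lt (Nat.lt_succ_of_lt h)]

theorem cast_alternating_sum_range_choose (n m : ℕ) :
    ∑ k ∈ range (m + 1), (-1 : R) ^ k * (n + 1).choose k = (-1) ^ m * n.choose m := by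
  exact_mod_cast congrArg (Int.cast (R := R))
    (Int.alternating_sum_range_choose_eq_choose (n := n) (m := m))

open Polynomial in
theorem coeff_mul_expand {f : R[X]} (hf : f.natDegree < p) (g : R[X]) (K : ℕ) {c : ℕ}
    (hc : c < p) : (f * expand R p g).coeff (p * K + c) = f.coeff c * g.coeff K := by
  rw [coeff_mul, sum_eq_single (c, p * K), coeff_expand_mul' (by omega)]
  · rintro ⟨i, j⟩ hij hne
    have hij : i + j = p * K + c := mem_antidiagonal.mp hij
    rcases lt_or_ge i p with hi | hi
    · rw [coeff_expand (by omega), if_neg, mul_zero]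
      rintro ⟨l, rfl⟩
      have hic : i = c := by
        simpa [Nat.mod_eq_of_lt hi, Nat.mod_eq_of_lt hc] using congrArg (· % p) hij
      exact hne (Prod.ext hic (by dsimp only; omega))
    · rw [coeff_eq_zero_of_natDegree_lt (hf.trans_le hi), zero_mul]
  · simp [add_comm]

variable [Fact p.Prime]

open Polynomial in
theorem one_add_X_pow_mul (hR : (p : R) ^ 2 = 0) (N : ℕ) :
    (1 + X : R[X]) ^ (p * N) = expand R p ((1 + X) ^ N) +
      ((1 + X) ^ p - (1 + X ^ p)) * expand R p ((N : R[X]) * (1 + X) ^ (N - 1)) := by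
  obtain ⟨f, hf⟩ := exists_add_pow_prime_eq (Fact.out : p.Prime) (1 : R[X]) X
  obtain ⟨g, hg⟩ := powAddExpansion (1 + X ^ p : R[X]) ((p : R[X]) * X * f) N
  have hp2 : (p : R[X]) ^ 2 = 0 := by simpa using congrArg C hR
  have hpow : (1 + X : R[X]) ^ p = 1 + X ^ p + (p : R[X]) * X * f := by simpa using hf
  simp only [pow_mul, hpow, hg, map_pow, map_add, map_mul, map_one, map_natCast, expand_X]
  linear_combination g * (X * f) ^ 2 * hp2

open Polynomial in
theorem cast_choose_mul_mul_add_eq_ite (hR : (p : R) ^ 2 = 0) (N K : ℕ) {c : ℕ} (hc : c < p) :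
    ((p * N).choose (p * K + c) : R) =
      if c = 0 then (N.choose K : R) else p.choose c * ((N - K) * N.choose K) := by
  have hcoeff (i : ℕ) : ((1 + X : R[X]) ^ p - (1 + X ^ p)).coeff i =
      (p.choose i : R) - ((if i = 0 then 1 else 0) + if i = p then 1 else 0) := by
    simp only [coeff_sub, coeff_add, coeff_one_add_X_pow, coeff_one, coeff_X_pow]
  have hdeg : ((1 + X : R[X]) ^ p - (1 + X ^ p)).natDegree < p := by
    refine (natDegree_le_iff_coeff_eq_zero.mpr fun i hi => ?_).trans_lt
      (Nat.pred_lt (by omega))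
    rw [hcoeff, if_neg (by rintro rfl; simp at hi)]
    rcases (Nat.le_of_pred_lt hi).eq_or_lt with rfl | hi
    · simp
    · simp [hi.ne', Nat.choose_eq_zero_of_lt hi]
  rw [← coeff_one_add_X_pow, one_add_X_pow_mul hR, coeff_add, ← one_mul (expand R p (_ ^ N)),
    coeff_mul_expand (by simpa using Nat.zero_lt_of_lt hc) _ _ hc, coeff_mul_expand hdeg _ _ hc,
    coeff_natCast_mul, coeff_one_add_X_pow, coeff_one_add_X_pow, cast_mul_choose_pred, hcoeff,
    coeff_one, if_neg hc.ne]
  split_ifs with h <;> simp [h]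

theorem cast_choose_mul_mul (hR : (p : R) ^ 2 = 0) (N K : ℕ) :
    ((p * N).choose (p * K) : R) = N.choose K := by
  simpa using cast_choose_mul_mul_add_eq_ite hR N K (Fact.out : p.Prime).pos

theorem cast_choose_mul_mul_add (hR : (p : R) ^ 2 = 0) (N K : ℕ) {c : ℕ} (hc0 : c ≠ 0)
    (hc : c < p) :
    ((p * N).choose (p * K + c) : R) = p.choose c * ((N - K) * N.choose K) := by
  rw [cast_choose_mul_mul_add_eq_ite hR N K hc, if_neg hc0]

theorem cast_choose_mul_add_one_mul (hR : (p : R) ^ 2 = 0) (N K : ℕ) :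
    ((p * N + 1).choose (p * K) : R) = (1 + p * K) * N.choose K := by
  rcases K with _ | K
  · simp
  · have hp : p.Prime := Fact.out
    have hsub : p * (K + 1) = p * K + (p - 1) + 1 := by
      have := hp.pos
      rw [mul_add]
      omega
    have h0 := cast_choose_mul_mul hR N (K + 1)
    have h1 := cast_choose_mul_mul_add hR N K (Nat.sub_ne_zero_of_lt hp.one_lt)
      (Nat.pred_lt hp.ne_zero)
    rw [Nat.choose_symm hp.one_le, Nat.choose_one_right] at h1
    rw [hsub] at h0 ⊢
    rw [Nat.choose_succ_succ']
    push_cast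
    linear_combination h0 + h1 - p * cast_succ_mul_choose_succ (R := R) N K

theorem cast_choose_mul_add_one_mul_add_one (hR : (p : R) ^ 2 = 0) (N K : ℕ) :
    ((p * N + 1).choose (p * K + 1) : R) = (1 + p * (N - K)) * N.choose K := by
  have h0 := cast_choose_mul_mul hR N K
  have h1 := cast_choose_mul_mul_add hR N K one_ne_zero (Fact.out : p.Prime).one_lt
  rw [Nat.choose_one_right] at h1
  rw [Nat.choose_succ_succ']
  push_cast
  linear_combination h0 + h1

theorem cast_choose_mul_add_two_mul_add_one (hR : (p : R) ^ 2 = 0) (N K : ℕ) :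
    ((p * N + 2).choose (p * K + 1) : R) = (2 + p * N) * N.choose K := by
  have h0 := cast_choose_mul_add_one_mul hR N K
  have h1 := cast_choose_mul_add_one_mul_add_one hR N K
  rw [Nat.choose_succ_succ']
  push_cast
  linear_combination h0 + h1

theorem sum_range_neg_one_pow_mul_choose_mul_add (hR : (p : R) ^ 2 = 0) (hp2 : p ≠ 2) (N K : ℕ) :
    ∑ c ∈ range p, (-1 : R) ^ (p * K + c) * (p * N).choose (p * K + c) =
      (-1) ^ K * N.choose K := by
  have hp : p.Prime := Fact.out
  have hodd : Odd p := hp.odd_of_ne_two hp2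
  have hsign : (-1 : R) ^ (p * K) = (-1) ^ K := by rw [pow_mul, hodd.neg_one_pow]
  obtain ⟨q, rfl⟩ : ∃ q, p = q + 1 := Nat.exists_eq_succ_of_ne_zero hp.ne_zero
  have hzero : ∑ c ∈ range q, (-1 : R) ^ (c + 1) * (q + 1).choose (c + 1) = 0 := by
    have := cast_alternating_sum_range_choose (R := R) q (q + 1)
    rw [sum_range_succ, sum_range_succ', Nat.choose_succ_self] at this
    simpa [hodd.neg_one_pow] using this
  rw [sum_range_succ', add_zero, cast_choose_mul_mul hR, hsign, add_eq_right]
  calc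
    _ = (-1) ^ K * ((N - K) * N.choose K) *
        ∑ c ∈ range q, (-1 : R) ^ (c + 1) * (q + 1).choose (c + 1) := by
      rw [mul_sum]
      refine sum_congr rfl fun c hc => ?_
      rw [cast_choose_mul_mul_add hR _ _ c.succ_ne_zero (by simpa using hc), pow_add, hsign]
      ring
    _ = 0 := by rw [hzero, mul_zero]

-- Row `p * N + (p - 1)` is recovered from the partial alternating sums of row `p * (N + 1)`.
theorem cast_choose_mul_add_pred_mul (hR : (p : R) ^ 2 = 0) (hp2 : p ≠ 2) (N K : ℕ) :
    ((p * N + (p - 1)).choose (p * K) : R) = N.choose K := by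
  have hp : p.Prime := Fact.out
  have hsign : (-1 : R) ^ (p * K) = (-1) ^ K := by
    rw [pow_mul, (hp.odd_of_ne_two hp2).neg_one_pow]
  have hrow : p * (N + 1) = p * N + (p - 1) + 1 := by
    have := hp.pos
    rw [mul_add]
    omega
  refine (isUnit_one.neg.pow K).mul_left_cancel ?_
  calc
    _ = ∑ k ∈ range (p * K + 1), (-1 : R) ^ k * (p * (N + 1)).choose k := by
      rw [hrow, cast_alternating_sum_range_choose, hsign]
    _ = ∑ i ∈ range (K + 1), (-1 : R) ^ i * (N + 1).choose i := by
      rw [sum_range_succ, sum_range_mul, sum_range_succ, cast_choose_mul_mul hR, hsign]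
      simp only [sum_range_neg_one_pow_mul_choose_mul_add hR hp2]
    _ = (-1) ^ K * N.choose K := cast_alternating_sum_range_choose N K

theorem dvd_choose_mul_add (N K : ℕ) {b c : ℕ} (hbc : b < c) (hc : c < p) :
    p ∣ (p * N + b).choose (p * K + c) := by
  have h := Choose.choose_modEq_choose_mod_mul_choose_div_nat (p := p) (n := p * N + b)
    (k := p * K + c)
  rw [Nat.mul_add_mod, Nat.mul_add_mod, Nat.mod_eq_of_lt hc, Nat.mod_eq_of_lt (hbc.trans hc),
    Nat.choose_eq_zero_of_lt hbc, zero_mul] at h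
  exact Nat.modEq_zero_iff_dvd.mp h

end Binomials

section Apery

variable {p : ℕ} {R : Type*} [CommRing R]

theorem apery_mul_add {r : ℕ} (hr : r ≠ 0) (s N : ℕ) {q b : ℕ} (hb : b < q) :
    apery r s (q * N + b) = ∑ K ∈ range (N + 1), ∑ c ∈ range q,
      (q * N + b).choose (q * K + c) ^ r *
        (q * N + b + (q * K + c)).choose (q * K + c) ^ s := by
  rw [← sum_range_mul fun k => (q * N + b).choose k ^ r * (q * N + b + k).choose k ^ s, apery]
  refine sum_subset (range_mono (by rw [mul_add]; omega)) fun k _ hk => ?_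
  rw [Nat.choose_eq_zero_of_lt (by simpa using hk), zero_pow hr, zero_mul]

variable [Fact p.Prime] {r s : ℕ}

theorem cast_apery_prime_mul_add (hR : (p : R) ^ 2 = 0) (hr : 2 ≤ r) (s N : ℕ) {b : ℕ}
    (hb : b < p) :
    (apery r s (p * N + b) : R) = ∑ K ∈ range (N + 1), ∑ c ∈ range (b + 1),
      ((p * N + b).choose (p * K + c) : R) ^ r *
        ((p * N + b + (p * K + c)).choose (p * K + c) : R) ^ s := by
  rw [apery_mul_add (by omega) s N hb]
  push_cast
  refine sum_congr rfl fun K _ => (sum_subset (range_mono hb) fun c hc hbc => ?_).symm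
  rw [mem_range] at hc hbc
  rw [cast_pow_eq_zero hR (dvd_choose_mul_add N K (by omega) hc) hr, zero_mul]

theorem cast_apery_prime_mul (hR : (p : R) ^ 2 = 0) (hr : 2 ≤ r) (s N : ℕ) :
    (apery r s (p * N) : R) = apery r s N := by
  have h := cast_apery_prime_mul_add hR hr s N (Fact.out : p.Prime).pos
  simp only [zero_add, range_one, sum_singleton, add_zero, ← mul_add, cast_choose_mul_mul hR] at h
  exact_mod_cast h

theorem cast_apery_prime_mul_add_pred (hR : (p : R) ^ 2 = 0) (hp2 : p ≠ 2) (hr : r ≠ 0)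
    (hs : 2 ≤ s) (N : ℕ) : (apery r s (p * N + (p - 1)) : R) = apery r s N := by
  have hp : 0 < p := (Fact.out : p.Prime).pos
  rw [apery_mul_add hr s N (Nat.sub_lt hp one_pos), apery]
  push_cast
  refine sum_congr rfl fun K _ => ?_
  rw [sum_eq_single_of_mem 0 (mem_range.mpr hp)]
  · rw [add_zero, add_right_comm, ← mul_add, cast_choose_mul_add_pred_mul hR hp2,
      cast_choose_mul_add_pred_mul hR hp2]
  · intro c hc hc0
    rw [mem_range] at hc
    have hcarry : p * N + (p - 1) + (p * K + c) = p * (N + K + 1) + (c - 1) := by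
      rw [mul_add, mul_add]
      omega
    rw [hcarry, cast_pow_eq_zero hR (dvd_choose_mul_add _ K (by omega) hc) hs, mul_zero]

theorem cast_apery_prime_mul_add_one (hR : (p : R) ^ 2 = 0) (hr : 2 ≤ r) (s N : ℕ) :
    (apery r s (p * N + 1) : R) = ∑ K ∈ range (N + 1),
      ((1 + p * K) ^ (r + s) + (1 + p * (N - K)) ^ r * (2 + p * (N + K)) ^ s) *
        ((N.choose K : R) ^ r * ((N + K).choose K : R) ^ s) := by
  rw [cast_apery_prime_mul_add hR hr s N (Fact.out : p.Prime).one_lt]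
  refine sum_congr rfl fun K _ => ?_
  have h0 : p * N + 1 + p * K = p * (N + K) + 1 := by ring
  have h1 : p * N + 1 + (p * K + 1) = p * (N + K) + 2 := by ring
  rw [sum_range_succ, sum_range_one, add_zero, h0, h1, cast_choose_mul_add_one_mul hR,
    cast_choose_mul_add_one_mul hR, cast_choose_mul_add_one_mul_add_one hR,
    cast_choose_mul_add_two_mul_add_one hR]
  push_cast
  simp only [mul_pow, pow_add]
  ring

theorem cast_apery_three_mul_add_one (hr : 2 ≤ r) (hr3 : r % 3 = 1) (hs6 : s % 6 = 5) (N : ℕ) :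
    (apery r s (3 * N + 1) : ZMod 9) = 3 * (N + 2) * apery r s N := by
  have hcube : ∀ x : ZMod 9, (1 + 3 * x) ^ 3 = 1 := by decide
  have hsixth : ∀ x : ZMod 9, (2 + 3 * x) ^ 6 = 1 := by decide
  have hpoly : ∀ x y : ZMod 9, 1 + (1 + 3 * (x - y)) * (2 + 3 * (x + y)) ^ 5 = 3 * (x + 2) := by
    decide
  rw [cast_apery_prime_mul_add_one (p := 3) (by decide) hr, apery]
  push_cast
  rw [mul_sum]
  refine sum_congr rfl fun K _ => ?_
  rw [pow_eq_pow_mod (r + s) (hcube _), pow_eq_pow_mod r (hcube _), pow_eq_pow_mod s (hsixth _),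
    hr3, hs6, show (r + s) % 3 = 0 by omega, pow_zero, pow_one, hpoly]

theorem cast_apery_three_mul_add_digit (hr : 2 ≤ r) (hr3 : r % 3 = 1) (hs6 : s % 6 = 5)
    (N : ℕ) {b : ℕ} (hb : b ≤ 2) : (apery r s (3 * N + b) : ZMod 9) =
      (if b = 1 then 3 * ((N : ZMod 9) + 2) else 1) * apery r s N := by
  interval_cases b
  · simpa using cast_apery_prime_mul (p := 3) (by decide) hr s N
  · simpa using cast_apery_three_mul_add_one hr hr3 hs6 N
  · simpa using cast_apery_prime_mul_add_pred (p := 3) (by decide) (by decide)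
      (by omega) (by omega) N

end Apery

section Digits

/-- The positions below `m` at which the digit sequence `d` has the digit `1`. -/
def onePositions (d : ℕ → ℕ) (m : ℕ) : Finset ℕ :=
  (range m).filter fun i => d i = 1

variable {d : ℕ → ℕ} {m : ℕ}

theorem mem_onePositions {i : ℕ} : i ∈ onePositions d m ↔ i < m ∧ d i = 1 := by
  simp [onePositions]

theorem mul_sum_digits {q : ℕ} {R : Type*} [CommRing R] (hR : (q : R) ^ 2 = 0) (hd : d m = 0) :
    (q : R) * (∑ i ∈ range m, d i * q ^ i : ℕ) = q * d 0 := by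
  rcases m with _ | m
  · simp [hd]
  · rw [sum_range_succ']
    push_cast
    simp only [pow_succ, ← mul_assoc, ← sum_mul]
    linear_combination (∑ i ∈ range m, (d (i + 1) : R) * q ^ i) * hR

theorem cast_apery_sum_digits {r s : ℕ} (hr : 2 ≤ r) (hr3 : r % 3 = 1) (hs6 : s % 6 = 5)
    (hd2 : ∀ i, d i ≤ 2) (hd : d m = 0) :
    (apery r s (∑ i ∈ range m, d i * 3 ^ i) : ZMod 9) =
      ∏ i ∈ onePositions d m, 3 * ((d (i + 1) : ZMod 9) + 2) := by
  rw [onePositions, prod_filter]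
  induction m generalizing d with
  | zero => simp [apery]
  | succ m ih =>
    have hsum : ∑ i ∈ range (m + 1), d i * 3 ^ i = 3 * ∑ i ∈ range m, d (i + 1) * 3 ^ i + d 0 := by
      rw [sum_range_succ', mul_sum, pow_zero, mul_one]
      simp only [pow_succ, mul_left_comm, mul_comm]
    have htail := mul_sum_digits (q := 3) (R := ZMod 9) (d := fun i => d (i + 1)) (by decide) hd
    have hfactor : (3 * ((∑ i ∈ range m, d (i + 1) * 3 ^ i : ℕ) + 2) : ZMod 9) =
        3 * (d 1 + 2) := by
      linear_combination htail
    rw [hsum, cast_apery_three_mul_add_digit hr hr3 hs6 _ (hd2 0), hfactor,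
      ih (d := fun i => d (i + 1)) (fun i => hd2 _) hd, prod_range_succ', mul_comm]

theorem forall_digit_zero_or_two_iff (hd2 : ∀ i, d i ≤ 2) :
    (∀ i ≤ m, d i = 0 ∨ d i = 2) ↔ onePositions d (m + 1) = ∅ := by
  simp only [eq_empty_iff_forall_notMem, mem_onePositions, not_and, Nat.lt_succ_iff]
  refine forall₂_congr fun i _ => ?_
  have := hd2 i
  omega

theorem uniqueOcc_one_iff {a : ℕ} (hd2 : ∀ i, d i ≤ 2) (ha : a ≠ 1) :
    uniqueOcc d m a 1 ↔ ∃ j, onePositions d (m + 1) = {j} ∧ d (j + 1) = a := by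
  simp only [eq_singleton_iff_unique_mem, mem_onePositions]
  constructor
  · rintro ⟨hocc, hrest⟩
    obtain ⟨ν, hν⟩ := card_eq_one.mp hocc
    obtain ⟨hνm, hνa, hν1⟩ := mem_filter.mp (hν ▸ mem_singleton_self ν)
    obtain ⟨j, rfl⟩ : ∃ j, ν = j + 1 := Nat.exists_eq_add_of_le' (mem_Icc.mp hνm).1
    refine ⟨j, ⟨⟨(mem_Icc.mp hνm).2, hν1⟩, fun i ⟨him, hi1⟩ => ?_⟩, hνa⟩
    by_contra hij
    have := hrest (j + 1) hνm ⟨hνa, hν1⟩ i (by omega) (by rintro rfl; omega) hij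
    omega
  · rintro ⟨j, ⟨⟨hjm, hj1⟩, hunique⟩, hja⟩
    refine ⟨card_eq_one.mpr ⟨j + 1, ?_⟩, fun ν hν ⟨_, hν1⟩ i him _ hiν => ?_⟩
    · refine eq_singleton_iff_unique_mem.mpr
        ⟨mem_filter.mpr ⟨mem_Icc.mpr ⟨by omega, hjm⟩, hja, hj1⟩, fun ν hν => ?_⟩
      obtain ⟨hνm, -, hν1⟩ := mem_filter.mp hν
      rw [mem_Icc] at hνm
      have := hunique (ν - 1) ⟨by omega, hν1⟩
      omega
    · rw [mem_Icc] at hν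
      have hνj := hunique (ν - 1) ⟨by omega, hν1⟩
      have hi1 : d i ≠ 1 := fun h => hiν (hνj ▸ hunique i ⟨by omega, h⟩)
      have := hd2 i
      omega

theorem digit_succ_eq_zero_or_two {j : ℕ} (hd2 : ∀ i, d i ≤ 2) (hd0 : d m = 0)
    (hj : onePositions d m = {j}) : d (j + 1) = 0 ∨ d (j + 1) = 2 := by
  obtain ⟨hjm, -⟩ := mem_onePositions.mp (hj ▸ mem_singleton_self j)
  have hle := hd2 (j + 1)
  have hne : d (j + 1) ≠ 1 := fun h => by
    rcases Nat.lt_or_eq_of_le (Nat.succ_le_of_lt hjm) with hlt | heq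
    · have : j + 1 ∈ onePositions d m := mem_onePositions.mpr ⟨hlt, h⟩
      simp [hj] at this
    · simp [← heq, h] at hd0
  omega

end Digits

/-- Apéry numbers mod 9 for `r ≡ 1 (mod 3)`, `r ≥ 4`, `s ≡ 5 (mod 6)`. -/
theorem apery_mod_nine_r1_s5 (r s : ℕ) (hr : 0 < r) (hs : 0 < s)
    (hr3 : r % 3 = 1) (hr4 : 4 ≤ r) (hs6 : s % 6 = 5)
    (n m : ℕ) (d : ℕ → ℕ) (hd2 : ∀ i, d i ≤ 2) (hd0 : ∀ i, m < i → d i = 0)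
    (hn : n = ∑ i ∈ Finset.range (m + 1), d i * 3 ^ i) :
    (apery r s n ≡ 1 [MOD 9] ↔ (∀ i ≤ m, d i = 0 ∨ d i = 2)) ∧
    (apery r s n ≡ 3 [MOD 9] ↔ uniqueOcc d m 2 1) ∧
    (apery r s n ≡ 6 [MOD 9] ↔ uniqueOcc d m 0 1) ∧
    (¬ (∀ i ≤ m, d i = 0 ∨ d i = 2) ∧ ¬ uniqueOcc d m 2 1 ∧ ¬ uniqueOcc d m 0 1 → 9 ∣ apery r s n) ∧
    ¬ (apery r s n ≡ 2 [MOD 9]) ∧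
    ¬ (apery r s n ≡ 4 [MOD 9]) ∧
    ¬ (apery r s n ≡ 5 [MOD 9]) ∧
    ¬ (apery r s n ≡ 7 [MOD 9]) ∧
    ¬ (apery r s n ≡ 8 [MOD 9]) := by
  have hdm : d (m + 1) = 0 := hd0 _ m.lt_succ_self
  have hprod := cast_apery_sum_digits (by omega : 2 ≤ r) hr3 hs6 hd2 hdm
  rw [forall_digit_zero_or_two_iff hd2, uniqueOcc_one_iff hd2 (by decide),
    uniqueOcc_one_iff hd2 (by decide), ← Nat.modEq_zero_iff_dvd]
  simp only [← ZMod.natCast_eq_natCast_iff, hn, hprod]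
  rcases (onePositions d (m + 1)).eq_empty_or_nonempty with hnone | ⟨j, hj⟩
  · have hsingle (j) : (∅ : Finset ℕ) ≠ {j} := (singleton_ne_empty j).symm
    simp only [hnone, prod_empty, hsingle, false_and, exists_false]
    decide
  rcases eq_singleton_or_nontrivial hj with hone | hmany
  · have hsingle (a : ℕ) : (∃ i, ({j} : Finset ℕ) = {i} ∧ d (i + 1) = a) ↔ d (j + 1) = a := by simp
    rcases digit_succ_eq_zero_or_two hd2 hdm hone with hnext | hnext <;>
    · simp only [hone, prod_singleton, hsingle, hnext, singleton_ne_empty]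
      decide
  · have hsingle (j) : onePositions d (m + 1) ≠ {j} := fun h => by simp [h] at hmany
    simp only [prod_mul_eq_zero_of_nontrivial (by decide : (3 : ZMod 9) ^ 2 = 0) hmany,
      hmany.nonempty.ne_empty, hsingle, false_and, exists_false]
    decide
end
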